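/- Let d ≥ 1, λ, μ ∈ ℝ^d, h > 0 and m ≥ 0 an integer. Let φ : ℝ^d → ℝ be (m+3)-times continuously differentiable with sup_{x∈ℝ^d} ‖D^{m+3}φ(x)‖ < ∞. Then the second-order difference operator δ_{−h,λ}δ_{h,μ} admits the power series expansion in h: for every x ∈ ℝ^d, |δ_{−h,λ}(δ_{h,μ}φ)(x) − Σ_{i=0}^{m} h^i · ( Σ_{j,l ≥ 1, j+l = i+2} ((−1)^{j−1}/(j! · l!)) D_λ^j D_μ^l φ(x) )| ≤ N h^{m+1} · sup_{y∈ℝ^d} ‖D^{m+3}φ(y)‖, where N is a constant depending only on m, |λ| and |μ|. In particular, the coefficient of h^0 is D_λD_μφ(x). -/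

import Mathlib

/-!
The expansion is a Taylor expansion in two steps. Multiplied by `h ^ 2`, the difference operator is
`(φ(x + hμ) - φ(x)) - (φ(y + hμ) - φ(y))` with `y = x - hλ`. Expanding in direction `μ` at both `x`
and `y` to order `m + 2` turns this into
`∑_{1 ≤ l ≤ m+2} h^l / l! (D_μ^l φ(x) - D_μ^l φ(y))`, up to two remainders of order `h ^ (m + 3)`.
Each `D_μ^l φ(y)` is then expanded in direction `λ` at `x` up to order `m + 2 - l`, with a
remainder of order `h ^ (m + 3 - l)`; the terms with `j ≥ 1` derivatives in `λ` are those of the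
claim. Since `D_λ` is always applied after `D_μ`, the derivatives need not be commuted.

The ingredients are Taylor's formula along a line (`abs_taylor_line_le`), the bound
`|D_λ^j D_μ^l φ| ≤ |λ|^j |μ|^l ‖D^(j+l) φ‖` (from `norm_iteratedFDeriv_iterate_dirDeriv_le`), and a
reordering of the sum over the triangle `j, l ≥ 1`, `j + l ≤ m + 2` (`sum_triangle`).
-/

open Finset

/-- The directional derivative `D_λφ(x) = Dφ(x)(λ)`; its iterates give `D_λ^j`. -/
noncomputable def dirDeriv {d : ℕ} (lam : EuclideanSpace ℝ (Fin d))
    (φ : EuclideanSpace ℝ (Fin d) → ℝ) : EuclideanSpace ℝ (Fin d) → ℝ :=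
  fun x => fderiv ℝ φ x lam

/-- Differentiating once in direction `v` costs one order of smoothness. -/
lemma contDiff_dirDeriv {d : ℕ} (v : EuclideanSpace ℝ (Fin d)) {n : ℕ}
    {f : EuclideanSpace ℝ (Fin d) → ℝ} (hf : ContDiff ℝ (n + 1 : ℕ) f) :
    ContDiff ℝ n (dirDeriv v f) :=
  (hf.fderiv_right (m := n) (by norm_cast)).clm_apply contDiff_const

lemma contDiff_iterate_dirDeriv {d : ℕ} (v : EuclideanSpace ℝ (Fin d)) (k : ℕ) {n : ℕ}
    {f : EuclideanSpace ℝ (Fin d) → ℝ} (hf : ContDiff ℝ (n + k : ℕ) f) :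
    ContDiff ℝ n ((dirDeriv v)^[k] f) := by
  induction k generalizing f with
  | zero => simpa using hf
  | succ k ih =>
    rw [Function.iterate_succ_apply]
    exact ih (contDiff_dirDeriv v hf)

lemma norm_iteratedFDeriv_dirDeriv_le {d : ℕ} (v : EuclideanSpace ℝ (Fin d)) {n : ℕ}
    {f : EuclideanSpace ℝ (Fin d) → ℝ} (hf : ContDiff ℝ (n + 1 : ℕ) f)
    (y : EuclideanSpace ℝ (Fin d)) :
    ‖iteratedFDeriv ℝ n (dirDeriv v f) y‖ ≤ ‖v‖ * ‖iteratedFDeriv ℝ (n + 1) f y‖ := by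
  have h := norm_iteratedFDeriv_clm_apply_const (f := fderiv ℝ f) (c := v) (x := y) (n := n)
    (N := n) ((hf.fderiv_right (m := n) (by norm_cast)).contDiffAt) le_rfl
  rwa [norm_iteratedFDeriv_fderiv] at h

lemma norm_iteratedFDeriv_iterate_dirDeriv_le {d : ℕ} (v : EuclideanSpace ℝ (Fin d)) (k : ℕ)
    {n : ℕ} {f : EuclideanSpace ℝ (Fin d) → ℝ} (hf : ContDiff ℝ (n + k : ℕ) f)
    (y : EuclideanSpace ℝ (Fin d)) :
    ‖iteratedFDeriv ℝ n ((dirDeriv v)^[k] f) y‖ ≤ ‖v‖ ^ k * ‖iteratedFDeriv ℝ (n + k) f y‖ := by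
  induction k generalizing f with
  | zero => simp
  | succ k ih =>
    rw [Function.iterate_succ_apply]
    refine (ih (contDiff_dirDeriv v hf)).trans ?_
    rw [pow_succ, mul_assoc]
    exact mul_le_mul_of_nonneg_left (norm_iteratedFDeriv_dirDeriv_le (n := n + k) v hf y)
      (by positivity)

/-- The restriction of `f` to a line has iterated derivatives given by `D_v^k f`. The factor `t`
rescales the segment from `x` to `x + t • v` to the unit interval, whatever the sign of `t`. -/
lemma iteratedDeriv_line {d : ℕ} (x v : EuclideanSpace ℝ (Fin d)) (t : ℝ) (k : ℕ)
    {f : EuclideanSpace ℝ (Fin d) → ℝ} (hf : ContDiff ℝ k f) :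
    iteratedDeriv k (fun s : ℝ => f (x + (s * t) • v)) =
      fun s => t ^ k * (dirDeriv v)^[k] f (x + (s * t) • v) := by
  induction k with
  | zero => simp
  | succ k ih =>
    rw [iteratedDeriv_succ, ih (hf.of_le (by norm_cast; omega))]
    funext s
    have hk : ContDiff ℝ 1 ((dirDeriv v)^[k] f) := by
      refine contDiff_iterate_dirDeriv (n := 1) v k ?_
      rwa [add_comm 1 k]
    have h1 : HasDerivAt (fun s : ℝ => x + (s * t) • v) ((1 * t) • v) s :=
      (((hasDerivAt_id s).mul_const t).smul_const v).const_add x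
    have h2 := ((hk.differentiable one_ne_zero _).hasFDerivAt.comp_hasDerivAt s h1).const_mul
      (t ^ k)
    refine h2.deriv.trans ?_
    rw [Function.iterate_succ_apply', map_smul, smul_eq_mul, dirDeriv]
    ring

/-- Taylor's formula along a segment, with a uniform bound `K` on `D_v^(n+1) f`. -/
lemma abs_taylor_line_le {d : ℕ} (x v : EuclideanSpace ℝ (Fin d)) (t : ℝ) (n : ℕ) (K : ℝ)
    {f : EuclideanSpace ℝ (Fin d) → ℝ} (hf : ContDiff ℝ (n + 1 : ℕ) f)
    (hK : ∀ y, |(dirDeriv v)^[n + 1] f y| ≤ K) :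
    |f (x + t • v) - ∑ i ∈ range (n + 1), t ^ i / (i.factorial : ℝ) * (dirDeriv v)^[i] f x|
      ≤ |t| ^ (n + 1) * K / (n.factorial : ℝ) := by
  set g : ℝ → ℝ := fun s => f (x + (s * t) • v) with hg
  have hgc : ContDiff ℝ (n + 1 : ℕ) g := by
    refine hf.comp ?_
    fun_prop
  have hu : UniqueDiffOn ℝ (Set.Icc (0 : ℝ) 1) := uniqueDiffOn_Icc zero_lt_one
  have hd : ∀ i ≤ n + 1, ∀ y ∈ Set.Icc (0 : ℝ) 1, iteratedDerivWithin i g (Set.Icc 0 1) y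
      = t ^ i * (dirDeriv v)^[i] f (x + (y * t) • v) := by
    intro i hi y hy
    have hi' : ((i : ℕ) : WithTop ℕ∞) ≤ ((n + 1 : ℕ) : WithTop ℕ∞) := by exact_mod_cast hi
    rw [iteratedDerivWithin_eq_iteratedDeriv hu (hgc.of_le hi').contDiffAt hy,
      iteratedDeriv_line x v t i (hf.of_le hi')]
  have h := taylor_mean_remainder_bound (f := g) (a := 0) (b := 1) (x := 1) (n := n)
    (C := |t| ^ (n + 1) * K) zero_le_one (by exact_mod_cast hgc.contDiffOn) (by simp) (by
      intro y hy
      rw [hd _ le_rfl y hy, Real.norm_eq_abs, abs_mul, abs_pow]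
      exact mul_le_mul_of_nonneg_left (hK _) (by positivity))
  rw [taylor_within_apply, Real.norm_eq_abs] at h
  have hs : ∑ i ∈ range (n + 1), ((i.factorial : ℝ)⁻¹ * (1 - 0) ^ i) •
        iteratedDerivWithin i g (Set.Icc 0 1) 0
      = ∑ i ∈ range (n + 1), t ^ i / (i.factorial : ℝ) * (dirDeriv v)^[i] f x := by
    refine Finset.sum_congr rfl fun i hi => ?_
    rw [hd i (by simp at hi; omega) 0 (by simp)]
    simp
    ring
  rw [hs] at h
  simpa [hg] using h

/-- The triangle `j, l ≥ 1`, `j + l ≤ m + 2`, summed along antidiagonals and along rows of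
constant `l`. The row `l = m + 2` is empty. -/
lemma sum_triangle (F : ℕ → ℕ → ℝ) (m : ℕ) :
    ∑ i ∈ range (m + 1), ∑ j ∈ Icc 1 (i + 1), F j (i + 2 - j)
      = ∑ l ∈ range (m + 2), ∑ j ∈ range (m + 1 - l), F (j + 1) (l + 1) := by
  have h1 : ∀ i ∈ range (m + 1), ∑ j ∈ Icc 1 (i + 1), F j (i + 2 - j)
      = ∑ j ∈ range (i + 1), F (j + 1) (i - j + 1) := by
    intro i _
    rw [← Finset.Ico_add_one_right_eq_Icc, Finset.sum_Ico_eq_sum_range]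
    refine Finset.sum_congr (by simp) fun j hj => ?_
    simp at hj
    rw [add_comm 1 j, show i + 2 - (j + 1) = i - j + 1 by omega]
  rw [Finset.sum_congr rfl h1, Finset.sum_range_diag_flip (m + 1) fun j l => F (j + 1) (l + 1)]
  exact Finset.sum_comm' (by simp; omega)

/-- Power series expansion in `h` of the second-order difference operator
`δ_{−h,λ}δ_{h,μ}`: the coefficient of `h^i` is
`∑_{j,l ≥ 1, j+l = i+2} ((−1)^{j−1}/(j! l!)) D_λ^j D_μ^l φ`, the remainder is of order
`h^{m+1}` with a constant depending only on `m`, `|λ|` and `|μ|`; in particular the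
coefficient of `h^0` is `D_λ D_μ φ`. -/
theorem mixed_difference_taylor_expansion :
    ∃ N : ℕ → ℝ → ℝ → ℝ,
      ∀ (d : ℕ), 1 ≤ d →
      ∀ (lam mu : EuclideanSpace ℝ (Fin d)) (h : ℝ), 0 < h →
      ∀ (m : ℕ) (φ : EuclideanSpace ℝ (Fin d) → ℝ),
        ContDiff ℝ (m + 3) φ →
        BddAbove (Set.range fun x => ‖iteratedFDeriv ℝ (m + 3) φ x‖) →
        (∀ x : EuclideanSpace ℝ (Fin d),
          |((φ (x + h • mu) - φ x) / h - (φ (x - h • lam + h • mu) - φ (x - h • lam)) / h) / h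
              - ∑ i ∈ Finset.range (m + 1), h ^ i *
                  ∑ j ∈ Finset.Icc 1 (i + 1),
                    ((-1 : ℝ) ^ (j - 1) / (Nat.factorial j * Nat.factorial (i + 2 - j)))
                      * (dirDeriv lam)^[j] ((dirDeriv mu)^[i + 2 - j] φ) x|
            ≤ N m ‖lam‖ ‖mu‖ * h ^ (m + 1) * ⨆ y, ‖iteratedFDeriv ℝ (m + 3) φ y‖)
        ∧ (∀ x : EuclideanSpace ℝ (Fin d),
            (∑ j ∈ Finset.Icc 1 (0 + 1),
                ((-1 : ℝ) ^ (j - 1) / (Nat.factorial j * Nat.factorial (0 + 2 - j)))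
                  * (dirDeriv lam)^[j] ((dirDeriv mu)^[0 + 2 - j] φ) x)
              = dirDeriv lam (dirDeriv mu φ) x) := by
  -- `a = |λ|`, `b = |μ|`: two remainders in direction `μ`, and one in direction `λ` for each `D_μ^l`.
  refine ⟨fun m a b => b ^ (m + 3) / ((m + 2).factorial : ℝ) + b ^ (m + 3) / ((m + 2).factorial : ℝ)
    + ∑ l ∈ range (m + 2), b ^ (l + 1) * a ^ (m + 2 - l)
        / (((l + 1).factorial : ℝ) * ((m + 1 - l).factorial : ℝ)), ?_⟩
  intro d _ lam mu h hh m φ hφ hbdd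
  refine ⟨fun x => ?_, fun x => by simp⟩
  set S : ℝ := ⨆ y, ‖iteratedFDeriv ℝ (m + 3) φ y‖ with hS
  have hφ' : ContDiff ℝ (m + 3 : ℕ) φ := by exact_mod_cast hφ
  have hle : ∀ y, ‖iteratedFDeriv ℝ (m + 3) φ y‖ ≤ S := fun y => le_ciSup hbdd y
  have hmix : ∀ j l, j + l = m + 3 → ∀ y,
      |(dirDeriv lam)^[j] ((dirDeriv mu)^[l] φ) y| ≤ ‖lam‖ ^ j * (‖mu‖ ^ l * S) := by
    intro j l hjl y
    rw [← hjl] at hφ'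
    have h1 := norm_iteratedFDeriv_iterate_dirDeriv_le (n := 0) lam j
      (by simpa using contDiff_iterate_dirDeriv mu l hφ') y
    rw [norm_iteratedFDeriv_zero, Real.norm_eq_abs, zero_add] at h1
    have h2 := norm_iteratedFDeriv_iterate_dirDeriv_le (n := j) mu l hφ' y
    rw [hjl] at h2
    refine h1.trans (mul_le_mul_of_nonneg_left (h2.trans ?_) (by positivity))
    exact mul_le_mul_of_nonneg_left (hle y) (by positivity)
  have hmu : ∀ z, |φ (z + h • mu)
      - ∑ l ∈ range (m + 3), h ^ l / (l.factorial : ℝ) * (dirDeriv mu)^[l] φ z|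
      ≤ h ^ (m + 3) * (‖mu‖ ^ (m + 3) * S) / ((m + 2).factorial : ℝ) := by
    intro z
    have := abs_taylor_line_le z mu h (m + 2) (‖mu‖ ^ (m + 3) * S) hφ'
      (fun y => by simpa using hmix 0 (m + 3) (by omega) y)
    rwa [abs_of_pos hh] at this
  have hlam : ∀ l ∈ range (m + 2), |(dirDeriv mu)^[l + 1] φ (x - h • lam)
      - ∑ j ∈ range (m + 2 - l), (-h) ^ j / (j.factorial : ℝ)
          * (dirDeriv lam)^[j] ((dirDeriv mu)^[l + 1] φ) x|
      ≤ h ^ (m + 2 - l) * (‖lam‖ ^ (m + 2 - l) * (‖mu‖ ^ (l + 1) * S))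
          / ((m + 1 - l).factorial : ℝ) := by
    intro l hl
    rw [Finset.mem_range] at hl
    have e : m + 2 - l = m + 1 - l + 1 := by omega
    have := abs_taylor_line_le x lam (-h) (m + 1 - l) (‖lam‖ ^ (m + 2 - l) * (‖mu‖ ^ (l + 1) * S))
      (f := (dirDeriv mu)^[l + 1] φ)
      (contDiff_iterate_dirDeriv mu (l + 1) (by convert hφ' using 2; omega))
      (fun y => by rw [← e]; exact hmix (m + 2 - l) (l + 1) (by omega) y)
    rwa [abs_neg, abs_of_pos hh, neg_smul, ← sub_eq_add_neg, ← e] at this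
  set A := φ (x + h • mu)
      - ∑ l ∈ range (m + 3), h ^ l / (l.factorial : ℝ) * (dirDeriv mu)^[l] φ x with hA
  set B := φ (x - h • lam + h • mu)
      - ∑ l ∈ range (m + 3), h ^ l / (l.factorial : ℝ) * (dirDeriv mu)^[l] φ (x - h • lam) with hB
  set C : ℕ → ℝ := fun l => (dirDeriv mu)^[l + 1] φ (x - h • lam)
      - ∑ j ∈ range (m + 2 - l), (-h) ^ j / (j.factorial : ℝ)
          * (dirDeriv lam)^[j] ((dirDeriv mu)^[l + 1] φ) x with hC
  set T := ∑ i ∈ Finset.range (m + 1), h ^ i *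
                  ∑ j ∈ Finset.Icc 1 (i + 1),
                    ((-1 : ℝ) ^ (j - 1) / (Nat.factorial j * Nat.factorial (i + 2 - j)))
                      * (dirDeriv lam)^[j] ((dirDeriv mu)^[i + 2 - j] φ) x with hT
  have hT2 : h ^ 2 * T = ∑ l ∈ range (m + 2), ∑ j ∈ range (m + 1 - l),
      h ^ (j + l + 2) * ((-1 : ℝ) ^ j / ((j + 1).factorial * (l + 1).factorial)
        * (dirDeriv lam)^[j + 1] ((dirDeriv mu)^[l + 1] φ) x) := by
    have := sum_triangle (fun j l => h ^ (j + l) * ((-1 : ℝ) ^ (j - 1) / (j.factorial * l.factorial)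
        * (dirDeriv lam)^[j] ((dirDeriv mu)^[l] φ) x)) m
    rw [hT, Finset.mul_sum]
    convert this using 1
    · refine Finset.sum_congr rfl fun i _ => ?_
      rw [← mul_assoc, Finset.mul_sum]
      refine Finset.sum_congr rfl fun j hj => ?_
      rw [Finset.mem_Icc] at hj
      rw [show j + (i + 2 - j) = 2 + i by omega, pow_add]
    · refine Finset.sum_congr rfl fun l _ => Finset.sum_congr rfl fun j _ => ?_
      rw [show j + 1 + (l + 1) = j + l + 2 by omega, Nat.add_sub_cancel]
  -- The terms without a derivative in `μ` cancel exactly, since `l = 0` contributes `φ(x)` and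
  -- `φ(x - hλ)`; `C l` and the row index `l` below belong to the derivative `D_μ^(l+1)`.
  have hnum : (φ (x + h • mu) - φ x) - (φ (x - h • lam + h • mu) - φ (x - h • lam)) - h ^ 2 * T
      = A - B - ∑ l ∈ range (m + 2), h ^ (l + 1) / ((l + 1).factorial : ℝ) * C l := by
    have hrow : ∀ l ∈ range (m + 2), h ^ (l + 1) / ((l + 1).factorial : ℝ) * C l
        = h ^ (l + 1) / ((l + 1).factorial : ℝ) * (dirDeriv mu)^[l + 1] φ (x - h • lam)
          - h ^ (l + 1) / ((l + 1).factorial : ℝ) * (dirDeriv mu)^[l + 1] φ x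
          + ∑ j ∈ range (m + 1 - l),
            h ^ (j + l + 2) * ((-1 : ℝ) ^ j / ((j + 1).factorial * (l + 1).factorial)
              * (dirDeriv lam)^[j + 1] ((dirDeriv mu)^[l + 1] φ) x) := by
      intro l hl
      rw [Finset.mem_range] at hl
      have hsum : ∑ j ∈ range (m + 1 - l),
            h ^ (j + l + 2) * ((-1 : ℝ) ^ j / ((j + 1).factorial * (l + 1).factorial)
              * (dirDeriv lam)^[j + 1] ((dirDeriv mu)^[l + 1] φ) x)
          = -(h ^ (l + 1) / ((l + 1).factorial : ℝ)) * ∑ j ∈ range (m + 1 - l),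
              (-h) ^ (j + 1) / ((j + 1).factorial : ℝ)
                * (dirDeriv lam)^[j + 1] ((dirDeriv mu)^[l + 1] φ) x := by
        rw [Finset.mul_sum]
        refine Finset.sum_congr rfl fun j _ => ?_
        rw [neg_pow h (j + 1)]
        field_simp
        ring
      rw [hsum]
      -- Split off `j = 0`, which is the term `D_μ^(l+1) φ(x)` of the row.
      simp only [hC]
      rw [show m + 2 - l = m + 1 - l + 1 by omega, Finset.sum_range_succ']
      simp only [pow_zero, Nat.factorial_zero, Nat.cast_one, div_one, one_mul,
        Function.iterate_zero, id_eq]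
      ring
    rw [Finset.sum_congr rfl hrow, Finset.sum_add_distrib, Finset.sum_sub_distrib, ← hT2, hA, hB,
      Finset.sum_range_succ' _ (m + 2), Finset.sum_range_succ' _ (m + 2)]
    simp only [pow_zero, Nat.factorial_zero, Nat.cast_one, div_one, one_mul,
        Function.iterate_zero, id_eq]
    ring
  have hquot : ((φ (x + h • mu) - φ x) / h
        - (φ (x - h • lam + h • mu) - φ (x - h • lam)) / h) / h - T
      = (A - B - ∑ l ∈ range (m + 2), h ^ (l + 1) / ((l + 1).factorial : ℝ) * C l) / h ^ 2 := by
    rw [← hnum]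
    field_simp
  rw [hquot, abs_div, abs_of_pos (pow_pos hh 2), div_le_iff₀ (pow_pos hh 2)]
  have hCsum : |∑ l ∈ range (m + 2), h ^ (l + 1) / ((l + 1).factorial : ℝ) * C l|
      ≤ ∑ l ∈ range (m + 2), h ^ (m + 3) * S * (‖mu‖ ^ (l + 1) * ‖lam‖ ^ (m + 2 - l)
        / (((l + 1).factorial : ℝ) * ((m + 1 - l).factorial : ℝ))) := by
    refine (Finset.abs_sum_le_sum_abs _ _).trans (Finset.sum_le_sum fun l hl => ?_)
    rw [abs_mul, abs_of_nonneg (by positivity)]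
    refine (mul_le_mul_of_nonneg_left (hlam l hl) (by positivity)).trans (le_of_eq ?_)
    rw [Finset.mem_range] at hl
    rw [show h ^ (m + 3) = h ^ (l + 1) * h ^ (m + 2 - l) by rw [← pow_add]; congr 1; omega]
    field_simp
  rw [← Finset.mul_sum] at hCsum
  have hAB : |A - B - ∑ l ∈ range (m + 2), h ^ (l + 1) / ((l + 1).factorial : ℝ) * C l|
      ≤ |A| + |B| + |∑ l ∈ range (m + 2), h ^ (l + 1) / ((l + 1).factorial : ℝ) * C l| :=
    (abs_sub _ _).trans (by gcongr; exact abs_sub _ _)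
  refine (hAB.trans (add_le_add (add_le_add (hmu x) (hmu (x - h • lam))) hCsum)).trans
    (le_of_eq ?_)
  ring
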